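/- Over the binary alphabet with E the letter-exchanging antimorphism, every finite word w with #Pal_E(w) = |w| + 1 − γ_E(w) (i.e., every E-rich finite word) is of the form (01)^n, (10)^n, (01)^n 0, or (10)^n 1 for some n ∈ ℕ. -/

import Mathlib

/-- The antimorphism `E` on `{0,1}*`: reversal composed with the exchange of
the letters `0` and `1`. -/
def Ebar (w : List (Fin 2)) : List (Fin 2) := (w.map (fun a => a + 1)).reverse

/-!
A palindromic factor created by prepending a letter is a prefix. Of two palindromic prefixes the
shorter is also a suffix of the longer, hence already occurred before the letter was prepended. So
each prepended letter, and by symmetry under `E` each appended one, creates at most one new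
palindromic factor. If adjacent letters `a`, `b` of `w` do not satisfy `b = E(a)`, then the only
palindromic factor of `ab` is the empty word, and `w` has at most `(|w| - 2) + 1 < |w|` of them.
Over `{0,1}` richness provides at least `|w|`, hence each letter of `w` is the exchange of the one
before it.
-/

section

variable {α : Type*} (σ : α → α)

/-- The antimorphism of the free monoid on `α` that acts on letters by `σ`; `Ebar` is the case
`σ = (· + 1)`. -/
def antimorphism (w : List α) : List α := (w.map σ).reverse

/-- The palindromic factors of `w`, including the empty word, with respect to the antimorphism
given by `σ`. -/
def palFactors (w : List α) : Set (List α) := {v | v <:+: w ∧ antimorphism σ v = v}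

variable {σ}

theorem antimorphism_append (u v : List α) :
    antimorphism σ (u ++ v) = antimorphism σ v ++ antimorphism σ u := by
  simp only [antimorphism, List.map_append, List.reverse_append]

theorem involutive_antimorphism (hσ : σ.Involutive) : (antimorphism σ).Involutive := fun w ↦ by
  simp [antimorphism, hσ.comp_self]

theorem finite_palFactors (w : List α) : (palFactors σ w).Finite :=
  w.sublists.finite_toSet.subset fun _ hv ↦ List.mem_sublists.2 hv.1.sublist

theorem palFactors_subset_antimorphism (w : List α) :
    palFactors σ w ⊆ palFactors σ (antimorphism σ w) := fun _ ⟨hvw, hv⟩ ↦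
  ⟨hv ▸ (hvw.map σ).reverse, hv⟩

theorem palFactors_antimorphism (hσ : σ.Involutive) (w : List α) :
    palFactors σ (antimorphism σ w) = palFactors σ w := by
  refine (palFactors_subset_antimorphism w).antisymm' ?_
  simpa only [involutive_antimorphism hσ w] using
    palFactors_subset_antimorphism (σ := σ) (antimorphism σ w)

theorem infix_of_prefix_cons_of_length_lt {a : α} {u v w : List α} (hu : antimorphism σ u = u)
    (hv : antimorphism σ v = v) (huw : u <+: a :: w) (hvw : v <+: a :: w)
    (hlt : u.length < v.length) : u <:+: w := by
  have huv : u <:+ v := by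
    have h := ((List.prefix_of_prefix_length_le huw hvw hlt.le).map σ).reverse
    rwa [← antimorphism, ← antimorphism, hu, hv] at h
  rcases List.prefix_cons_iff.1 hvw with rfl | ⟨t, rfl, htw⟩
  · exact absurd hlt (Nat.not_lt_zero _)
  · rcases List.suffix_cons_iff.1 huv with rfl | hut
    · exact absurd hlt (lt_irrefl _)
    · exact hut.isInfix.trans htw.isInfix

theorem subsingleton_palFactors_cons_sdiff (a : α) (w : List α) :
    (palFactors σ (a :: w) \ palFactors σ w).Subsingleton := by
  have prefix_of_new {v : List α} (hv : v ∈ palFactors σ (a :: w) \ palFactors σ w) :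
      v <+: a :: w :=
    (List.infix_cons_iff.1 hv.1.1).resolve_right fun hvw ↦ hv.2 ⟨hvw, hv.1.2⟩
  have length_le {u v : List α} (hu : u ∈ palFactors σ (a :: w) \ palFactors σ w)
      (hv : v ∈ palFactors σ (a :: w) \ palFactors σ w) : v.length ≤ u.length :=
    not_lt.1 fun hlt ↦ hu.2 ⟨infix_of_prefix_cons_of_length_lt hu.1.2 hv.1.2
      (prefix_of_new hu) (prefix_of_new hv) hlt, hu.1.2⟩
  intro u hu v hv
  exact (List.prefix_of_prefix_length_le (prefix_of_new hu) (prefix_of_new hv)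
    (length_le hv hu)).eq_of_length_le (length_le hu hv)

theorem ncard_palFactors_cons_le (a : α) (w : List α) :
    (palFactors σ (a :: w)).ncard ≤ (palFactors σ w).ncard + 1 := by
  have hnew : (palFactors σ (a :: w) \ palFactors σ w).ncard ≤ 1 :=
    (Set.ncard_le_one ((finite_palFactors _).sdiff)).2 fun _ hu _ hv ↦
      subsingleton_palFactors_cons_sdiff a w hu hv
  have hle := Set.ncard_le_ncard_sdiff_add_ncard (palFactors σ (a :: w)) (palFactors σ w)
    (finite_palFactors w)
  omega

theorem ncard_palFactors_append_left_le (u w : List α) :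
    (palFactors σ (u ++ w)).ncard ≤ u.length + (palFactors σ w).ncard := by
  induction u with
  | nil => simp
  | cons a u ih =>
    have := ncard_palFactors_cons_le (σ := σ) a (u ++ w)
    rw [List.cons_append, List.length_cons]
    omega

theorem ncard_palFactors_append_right_le (hσ : σ.Involutive) (w u : List α) :
    (palFactors σ (w ++ u)).ncard ≤ (palFactors σ w).ncard + u.length := by
  have h := ncard_palFactors_append_left_le (σ := σ) (antimorphism σ u) (antimorphism σ w)
  rw [← antimorphism_append, palFactors_antimorphism hσ, palFactors_antimorphism hσ] at h
  simpa [antimorphism, add_comm] using h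

theorem antimorphism_singleton_ne_self (hfix : ∀ x, σ x ≠ x) (a : α) :
    antimorphism σ [a] ≠ [a] := by
  simpa [antimorphism] using hfix a

theorem palFactors_pair_of_ne {a b : α} (hfix : ∀ x, σ x ≠ x) (hab : b ≠ σ a) :
    palFactors σ [a, b] = {[]} := by
  refine Set.Subset.antisymm ?_ (Set.singleton_subset_iff.2 ⟨List.nil_infix, rfl⟩)
  rintro v ⟨hv, hpal⟩
  have hcases : v = [] ∨ v = [a] ∨ v = [b] ∨ v = [a, b] := by
    simp only [List.infix_cons_iff, List.prefix_cons_iff, List.prefix_nil, List.infix_nil] at hv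
    aesop
  rcases hcases with rfl | rfl | rfl | rfl
  · rfl
  · exact absurd hpal (antimorphism_singleton_ne_self hfix a)
  · exact absurd hpal (antimorphism_singleton_ne_self hfix b)
  · have hswap : [σ b, σ a] = [a, b] := hpal
    simp only [List.cons.injEq, and_true] at hswap
    exact absurd hswap.2.symm hab

theorem isChain_of_length_le_ncard_palFactors (hσ : σ.Involutive) (hfix : ∀ x, σ x ≠ x)
    {w : List α} (hw : w.length ≤ (palFactors σ w).ncard) : w.IsChain (fun a b ↦ b = σ a) := by
  refine List.isChain_iff_forall_rel_of_append_cons_cons.2 fun a b p s hps ↦ ?_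
  by_contra hab
  have hle : (palFactors σ w).ncard ≤ p.length + (1 + s.length) := calc
    (palFactors σ w).ncard = (palFactors σ (p ++ ([a, b] ++ s))).ncard := by rw [hps]; rfl
    _ ≤ p.length + (palFactors σ ([a, b] ++ s)).ncard := ncard_palFactors_append_left_le _ _
    _ ≤ p.length + ((palFactors σ [a, b]).ncard + s.length) := by
      gcongr; exact ncard_palFactors_append_right_le hσ _ _
    _ = p.length + (1 + s.length) := by rw [palFactors_pair_of_ne hfix hab, Set.ncard_singleton]
  have hlen : w.length = p.length + (s.length + 2) := by
    simp only [hps, List.length_append, List.length_cons]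
  omega

theorem exists_eq_flatten_replicate_of_isChain (hσ : σ.Involutive) {a : α} :
    ∀ {w : List α}, (a :: w).IsChain (fun x y ↦ y = σ x) →
      ∃ n : ℕ, a :: w = (List.replicate n [a, σ a]).flatten ∨
        a :: w = (List.replicate n [a, σ a]).flatten ++ [a]
  | [], _ => ⟨0, .inr rfl⟩
  | [b], h => ⟨1, .inl (by simpa using h)⟩
  | b :: c :: w, h => by
    simp only [List.isChain_cons_cons] at h
    obtain ⟨rfl, rfl, hw⟩ := h
    rw [hσ a] at hw ⊢
    obtain ⟨n, hn⟩ := exists_eq_flatten_replicate_of_isChain hσ hw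
    exact ⟨n + 1, by simpa [List.replicate_succ] using hn⟩

end

theorem ncard_exchange_pairs_le_one (w : List (Fin 2)) :
    {s : Set (Fin 2) | ∃ a : Fin 2, a ∈ w ∧ a + 1 ≠ a ∧ s = {a, a + 1}}.ncard ≤ 1 := by
  have pair_eq_univ : ∀ a : Fin 2, ({a, a + 1} : Set (Fin 2)) = Set.univ := fun a ↦
    Set.eq_univ_of_forall fun x ↦ by revert a x; decide
  refine (Set.ncard_le_one (Set.toFinite _)).2 ?_
  rintro _ ⟨a, -, -, rfl⟩ _ ⟨b, -, -, rfl⟩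
  rw [pair_eq_univ, pair_eq_univ]

/-- Every `E`-rich finite binary word, i.e. every `w` with
`#Pal_E(w) = |w| + 1 - γ_E(w)`, is of the form `(01)^n`, `(10)^n`,
`(01)^n 0` or `(10)^n 1`. -/
theorem Erich_binary_words (w : List (Fin 2))
    (h : {v : List (Fin 2) | v <:+: w ∧ Ebar v = v}.ncard =
        w.length + 1 -
          {s : Set (Fin 2) | ∃ a : Fin 2, a ∈ w ∧ a + 1 ≠ a ∧ s = {a, a + 1}}.ncard) :
    ∃ n : ℕ,
      w = (List.replicate n ([0, 1] : List (Fin 2))).flatten ∨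
      w = (List.replicate n ([1, 0] : List (Fin 2))).flatten ∨
      w = (List.replicate n ([0, 1] : List (Fin 2))).flatten ++ [0] ∨
      w = (List.replicate n ([1, 0] : List (Fin 2))).flatten ++ [1] := by
  have hinv : (fun a : Fin 2 ↦ a + 1).Involutive := fun a ↦ by revert a; decide
  have hlen : w.length ≤ (palFactors (· + 1) w).ncard := by
    change (palFactors (· + 1) w).ncard = _ at h
    have := ncard_exchange_pairs_le_one w
    omega
  have hchain := isChain_of_length_le_ncard_palFactors hinv (by decide) hlen
  rcases w with _ | ⟨a, w⟩
  · exact ⟨0, .inl rfl⟩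
  · obtain ⟨n, hn⟩ := exists_eq_flatten_replicate_of_isChain hinv hchain
    match a, hn with
    | 0, .inl hw => exact ⟨n, .inl hw⟩
    | 0, .inr hw => exact ⟨n, .inr (.inr (.inl hw))⟩
    | 1, .inl hw => exact ⟨n, .inr (.inl hw)⟩
    | 1, .inr hw => exact ⟨n, .inr (.inr (.inr hw))⟩
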